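/- arXiv:2204.00580 — 4 statements merged into one kernel-verified Lean document; each statement's English description precedes it below -/
import Mathlib

section
/- For every δ > 0: if x ≥ x* + δ then b₁δ(x) > 0, and if x ≤ x* − δ then b₁δ(x) < 0. In particular the vector field of the average system ẋₐ = −(γ/2)·b₁δ(xₐ) points towards x* everywhere outside the interval [x* − δ, x* + δ]. -/
open Real MeasureTheory intervalIntegral Filter

/-- First Fourier sine coefficient of `t ↦ h (x + δ sin (2π t))`. -/
noncomputable def b1 (h : ℝ → ℝ) (δ x : ℝ) : ℝ :=
  2 * ∫ t in (0:ℝ)..1, h (x + δ * Real.sin (2 * Real.pi * t)) * Real.sin (2 * Real.pi * t)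

/-!
Since `sin (2π(t + 1/2)) = -sin (2πt)`, pairing `t` with `t + 1/2` gives
`b₁δ(x) = 2 ∫₀^{1/2} (h (x + δ s(t)) - h (x - δ s(t))) s(t) dt` with `s(t) = sin (2πt)`, and
`s > 0` on `(0, 1/2)`. So `b₁δ(x)` is positive as soon as `h` increases strictly on
`[x - δ, x + δ]`. The lower bound `α` makes the continuous function `h` injective, hence strictly
monotone, on either side of its minimiser.
-/

open Set

section HalfPeriod

lemma sin_two_pi_mul_add_half (t : ℝ) : sin (2 * π * (t + 1 / 2)) = -sin (2 * π * t) := by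
  rw [← sin_add_pi]
  ring_nf

lemma sin_two_pi_mul_pos {t : ℝ} (ht : t ∈ Ioo (0 : ℝ) (1 / 2)) : 0 < sin (2 * π * t) :=
  sin_pos_of_pos_of_lt_pi (mul_pos two_pi_pos ht.1) (by nlinarith [pi_pos, ht.2])

variable {E : Type*} [NormedAddCommGroup E] {F : ℝ → E}

lemma intervalIntegrable_comp_sin_half
    (hF : IntervalIntegrable (fun t ↦ F (sin (2 * π * t))) volume 0 1) :
    IntervalIntegrable (fun t ↦ F (sin (2 * π * t))) volume 0 (1 / 2) :=
  hF.mono_set (uIcc_subset_uIcc left_mem_uIcc (by norm_num [mem_uIcc]))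

lemma intervalIntegrable_comp_neg_sin_half
    (hF : IntervalIntegrable (fun t ↦ F (sin (2 * π * t))) volume 0 1) :
    IntervalIntegrable (fun t ↦ F (-sin (2 * π * t))) volume 0 (1 / 2) := by
  have hright : IntervalIntegrable (fun t ↦ F (sin (2 * π * t))) volume
      (0 + 1 / 2) (1 / 2 + 1 / 2) :=
    hF.mono_set (uIcc_subset_uIcc (by norm_num [mem_uIcc]) (by norm_num [mem_uIcc]))
  simpa only [sin_two_pi_mul_add_half, add_sub_cancel_right] using hright.comp_add_right (1 / 2)

lemma integral_comp_sin_eq_integral_half [NormedSpace ℝ E]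
    (hF : IntervalIntegrable (fun t ↦ F (sin (2 * π * t))) volume 0 1) :
    ∫ t in (0 : ℝ)..1, F (sin (2 * π * t)) =
      ∫ t in (0 : ℝ)..(1 / 2), (F (sin (2 * π * t)) + F (-sin (2 * π * t))) := by
  have hleft := intervalIntegrable_comp_sin_half hF
  have hright : IntervalIntegrable (fun t ↦ F (sin (2 * π * t))) volume (1 / 2) 1 :=
    hF.mono_set (uIcc_subset_uIcc (by norm_num [mem_uIcc]) right_mem_uIcc)
  have hshift : ∫ t in (1 / 2 : ℝ)..1, F (sin (2 * π * t)) =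
      ∫ t in (0 : ℝ)..(1 / 2), F (-sin (2 * π * t)) := by
    simp only [← sin_two_pi_mul_add_half]
    rw [integral_comp_add_right (fun t ↦ F (sin (2 * π * t)))]
    norm_num
  rw [← integral_add_adjacent_intervals hleft hright, hshift,
    integral_add hleft (intervalIntegrable_comp_neg_sin_half hF)]

end HalfPeriod

lemma intervalIntegrable_comp_of_monotoneOn {f u : ℝ → ℝ} {c d : ℝ} {μ : Measure ℝ}
    [IsLocallyFiniteMeasure μ] (hf : MonotoneOn f (Icc c d)) (hu : Measurable u)
    (hmaps : ∀ t, u t ∈ Icc c d) (a b : ℝ) : IntervalIntegrable (fun t ↦ f (u t)) μ a b := by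
  have hcd : c ≤ d := (hmaps 0).1.trans (hmaps 0).2
  let g : ℝ → ℝ := IccExtend hcd fun y ↦ f y
  have hg : Monotone g := Monotone.IccExtend hcd fun y z hyz ↦ hf y.2 z.2 hyz
  have hgu : g ∘ u = fun t ↦ f (u t) :=
    funext fun t ↦ IccExtend_of_mem hcd (fun y ↦ f y) (hmaps t)
  have hmeas : Measurable fun t ↦ f (u t) := hgu ▸ hg.measurable.comp hu
  have hbound (t : ℝ) : ‖f (u t)‖ ≤ max |f c| |f d| :=
    abs_le_max_abs_abs (hf (left_mem_Icc.2 hcd) (hmaps t) (hmaps t).1)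
      (hf (hmaps t) (right_mem_Icc.2 hcd) (hmaps t).2)
  exact (intervalIntegrable_const (c := max |f c| |f d|)).mono_fun' hmeas.aestronglyMeasurable
    (.of_forall hbound)

section FirstFourierSineCoefficient

variable {h : ℝ → ℝ} {δ x : ℝ}

lemma add_mul_sin_mem_Icc (hδ : 0 ≤ δ) (x θ : ℝ) : x + δ * sin θ ∈ Icc (x - δ) (x + δ) := by
  constructor <;> nlinarith [neg_one_le_sin θ, sin_le_one θ]

lemma b1_neg (h : ℝ → ℝ) (δ x : ℝ) : b1 (-h) δ x = -b1 h δ x := by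
  simp [b1]

lemma b1_pos_of_forall_sub_lt_add (hδ : 0 < δ)
    (hint : IntervalIntegrable (fun t ↦ h (x + δ * sin (2 * π * t)) * sin (2 * π * t)) volume 0 1)
    (hlt : ∀ r ∈ Ioc 0 δ, h (x - r) < h (x + r)) : 0 < b1 h δ x := by
  let F : ℝ → ℝ := fun s ↦ h (x + δ * s) * s
  replace hint : IntervalIntegrable (fun t ↦ F (sin (2 * π * t))) volume 0 1 := hint
  have hpair (t : ℝ) (ht : t ∈ Ioo (0 : ℝ) (1 / 2)) :
      0 < F (sin (2 * π * t)) + F (-sin (2 * π * t)) := by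
    have hs := sin_two_pi_mul_pos ht
    have hgap := hlt (δ * sin (2 * π * t))
      ⟨mul_pos hδ hs, mul_le_of_le_one_right hδ.le (sin_le_one _)⟩
    calc 0 < (h (x + δ * sin (2 * π * t)) - h (x - δ * sin (2 * π * t))) * sin (2 * π * t) :=
          mul_pos (sub_pos.2 hgap) hs
      _ = F (sin (2 * π * t)) + F (-sin (2 * π * t)) := by
          simp only [F, mul_neg, ← sub_eq_add_neg]
          ring
  have hpos := intervalIntegral_pos_of_pos_on
    ((intervalIntegrable_comp_sin_half hint).add (intervalIntegrable_comp_neg_sin_half hint))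
    hpair (by norm_num)
  rw [← integral_comp_sin_eq_integral_half hint] at hpos
  exact mul_pos two_pos hpos

lemma b1_pos_of_strictMonoOn (hδ : 0 < δ) (hmono : StrictMonoOn h (Icc (x - δ) (x + δ))) :
    0 < b1 h δ x := by
  refine b1_pos_of_forall_sub_lt_add hδ ?_ fun r hr ↦ ?_
  · exact (intervalIntegrable_comp_of_monotoneOn hmono.monotoneOn (by fun_prop)
      (fun t ↦ add_mul_sin_mem_Icc hδ.le x (2 * π * t)) 0 1).mul_continuousOn (by fun_prop)
  · obtain ⟨hr_pos, hr_le⟩ := hr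
    exact hmono ⟨by linarith, by linarith⟩ ⟨by linarith, by linarith⟩ (by linarith)

lemma b1_neg_of_strictAntiOn (hδ : 0 < δ) (hanti : StrictAntiOn h (Icc (x - δ) (x + δ))) :
    b1 h δ x < 0 := by
  rw [← neg_pos, ← b1_neg]
  exact b1_pos_of_strictMonoOn hδ hanti.neg

end FirstFourierSineCoefficient

section MonotoneBranches

lemma injOn_of_le_abs_sub {f α : ℝ → ℝ} {s : Set ℝ} (hα : ∀ r, 0 < r → 0 < α r)
    (hlb : ∀ x ∈ s, ∀ y ∈ s, α |y - x| ≤ |f y - f x|) : InjOn f s := by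
  intro x hx y hy hxy
  by_contra hne
  have hgap : 0 < |f y - f x| :=
    (hα _ (abs_pos.2 (sub_ne_zero.2 (Ne.symm hne)))).trans_le (hlb x hx y hy)
  simp [hxy] at hgap

variable {X Y : Type*} [ConditionallyCompleteLinearOrder X] [DenselyOrdered X]
  [TopologicalSpace X] [OrderTopology X] [LinearOrder Y] [TopologicalSpace Y]
  [OrderClosedTopology Y] {f : X → Y} {a : X}

lemma strictMonoOn_Ici_of_injOn (hf : ContinuousOn f (Ici a)) (hinj : InjOn f (Ici a))
    (hmin : IsMinOn f (Ici a) a) : StrictMonoOn f (Ici a) := by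
  intro y hy z hz hyz
  have hsub : Icc a z ⊆ Ici a := Icc_subset_Ici_self
  exact (hf.mono hsub).strictMonoOn_of_injOn_Icc hz (hmin hz) (hinj.mono hsub)
    ⟨hy, hyz.le⟩ (right_mem_Icc.2 hz) hyz

lemma strictAntiOn_Iic_of_injOn (hf : ContinuousOn f (Iic a)) (hinj : InjOn f (Iic a))
    (hmin : IsMinOn f (Iic a) a) : StrictAntiOn f (Iic a) := by
  intro y hy z hz hyz
  have hsub : Icc y a ⊆ Iic a := Icc_subset_Iic_self
  exact (hf.mono hsub).strictAntiOn_of_injOn_Icc hy (hmin hy) (hinj.mono hsub)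
    (left_mem_Icc.2 hy) ⟨hyz.le, hz⟩ hyz

lemma strictAntiOn_Iic_and_strictMonoOn_Ici_of_le_abs_sub {f α : ℝ → ℝ} {a : ℝ}
    (hf : Continuous f) (hmin : IsMinOn f univ a) (hα : ∀ r, 0 < r → 0 < α r)
    (hlb : ∀ x y : ℝ, 0 ≤ (x - a) * (y - a) → α |y - x| ≤ |f y - f x|) :
    StrictAntiOn f (Iic a) ∧ StrictMonoOn f (Ici a) := by
  have hinj_left : InjOn f (Iic a) := injOn_of_le_abs_sub hα fun x hx y hy ↦
    hlb x y (mul_nonneg_of_nonpos_of_nonpos (sub_nonpos.2 hx) (sub_nonpos.2 hy))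
  have hinj_right : InjOn f (Ici a) := injOn_of_le_abs_sub hα fun x hx y hy ↦
    hlb x y (mul_nonneg (sub_nonneg.2 hx) (sub_nonneg.2 hy))
  exact ⟨strictAntiOn_Iic_of_injOn hf.continuousOn hinj_left (hmin.on_subset (subset_univ _)),
    strictMonoOn_Ici_of_injOn hf.continuousOn hinj_right (hmin.on_subset (subset_univ _))⟩

end MonotoneBranches

theorem b1_sign_outside_general {h : ℝ → ℝ} {xstar δ : ℝ} (hanti : StrictAntiOn h (Iic xstar))
    (hmono : StrictMonoOn h (Ici xstar)) (hδ : 0 < δ) :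
    (∀ x : ℝ, xstar + δ ≤ x → 0 < b1 h δ x) ∧
    (∀ x : ℝ, x ≤ xstar - δ → b1 h δ x < 0) :=
  ⟨fun _ hx ↦ b1_pos_of_strictMonoOn hδ <|
      hmono.mono fun _ hy ↦ (le_sub_iff_add_le.2 hx).trans hy.1,
    fun _ hx ↦ b1_neg_of_strictAntiOn hδ <|
      hanti.mono fun _ hy ↦ hy.2.trans (le_sub_iff_add_le.1 hx)⟩

/-- sign of `b1` outside `[x* - δ, x* + δ]`. -/
theorem b1_sign_outside (h : ℝ → ℝ) (hsmooth : ContDiff ℝ (⊤ : ℕ∞) h)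
    (xstar : ℝ) (hmin : ∀ x : ℝ, x ≠ xstar → h xstar < h x)
    (α : ℝ → ℝ) (hα_cont : ContinuousOn α (Set.Ici 0))
    (hα_mono : StrictMonoOn α (Set.Ici 0)) (hα0 : α 0 = 0)
    (hα_top : Tendsto α atTop atTop)
    (hlb : ∀ x₁ x₂ : ℝ, (x₁ - xstar) * (x₂ - xstar) ≥ 0 → α |x₂ - x₁| ≤ |h x₂ - h x₁|)
    (δ : ℝ) (hδ : 0 < δ) :
    (∀ x : ℝ, xstar + δ ≤ x → 0 < b1 h δ x) ∧
    (∀ x : ℝ, x ≤ xstar - δ → b1 h δ x < 0) := by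
  have hmin_univ : IsMinOn h univ xstar := isMinOn_univ_iff.2 fun x ↦
    (eq_or_ne x xstar).elim (fun hx ↦ (congrArg h hx).ge) fun hx ↦ (hmin x hx).le
  obtain ⟨hanti, hmono⟩ := strictAntiOn_Iic_and_strictMonoOn_Ici_of_le_abs_sub hsmooth.continuous
    hmin_univ (fun r hr ↦ hα0 ▸ hα_mono self_mem_Ici hr.le hr) hlb
  exact b1_sign_outside_general hanti hmono hδ
end

section
/- If the function h̄(s) := h(x* + s) − h(x*) is even (h̄(−s) = h̄(s) for all s ∈ ℝ), then for every δ > 0 the point x* is an equilibrium of the average system, i.e. b₁δ(x*) = 0. -/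
open Real MeasureTheory intervalIntegral

section

variable {E : Type*} [NormedAddCommGroup E] [NormedSpace ℝ E]

theorem integral_eq_zero_of_sub_left_eq_neg {f : ℝ → E} {a b : ℝ}
    (hf : ∀ t ∈ Set.uIcc a b, f (a + b - t) = -f t) : ∫ t in a..b, f t = 0 := by
  have : IsAddTorsionFree E := .of_isTorsionFree ℝ E
  refine self_eq_neg.mp ?_
  calc
    ∫ t in a..b, f t = ∫ t in a..b, f (a + b - t) := by
      rw [integral_comp_sub_left, add_sub_cancel_right, add_sub_cancel_left]
    _ = ∫ t in a..b, -f t := integral_congr hf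
    _ = -∫ t in a..b, f t := integral_neg

theorem integral_comp_sin_two_pi_mul_eq_zero_of_odd {g : ℝ → E}
    (hg : ∀ y ∈ Set.Icc (-1) 1, g (-y) = -g y) :
    ∫ t in (0 : ℝ)..1, g (sin (2 * π * t)) = 0 := by
  refine integral_eq_zero_of_sub_left_eq_neg fun t _ => ?_
  have sin_reflect : sin (2 * π * (0 + 1 - t)) = -sin (2 * π * t) := by
    rw [zero_add, mul_sub, mul_one, sin_two_pi_sub]
  rw [sin_reflect, hg _ (sin_mem_Icc _)]

end

theorem b1_eq_zero_of_even_general {h : ℝ → ℝ} {δ x : ℝ}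
    (heven : ∀ s, |s| ≤ |δ| → h (x + -s) = h (x + s)) : b1 h δ x = 0 := by
  suffices ∫ t in (0 : ℝ)..1, h (x + δ * sin (2 * π * t)) * sin (2 * π * t) = 0 from
    mul_eq_zero_of_right 2 this
  refine integral_comp_sin_two_pi_mul_eq_zero_of_odd (g := fun y => h (x + δ * y) * y)
    fun y hy => ?_
  have abs_mul_le : |δ * y| ≤ |δ| := by
    rw [abs_mul]
    exact mul_le_of_le_one_right (abs_nonneg δ) (abs_le.mpr hy)
  rw [mul_neg, mul_neg, heven _ abs_mul_le]

/-- if `h̄(s) = h(x* + s) - h(x*)` is even, then `x*` is an equilibrium of the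
average system. -/
theorem b1_eq_zero_of_even (h : ℝ → ℝ) (hc : Continuous h) (xstar : ℝ)
    (heven : ∀ s : ℝ, h (xstar + -s) - h xstar = h (xstar + s) - h xstar)
    (δ : ℝ) (hδ : 0 < δ) :
    b1 h δ xstar = 0 :=
  b1_eq_zero_of_even_general fun s _ => sub_left_inj.mp (heven s)
end

section
/- If h is Lipschitz with constant L on the interval [x − δ, x + δ], then |b₁δ(x)| ≤ L·δ. In particular, the averaged drift of the extremum-seeking scheme at x is bounded by a quantity depending only on the local Lipschitz constant of h and on the dither amplitude δ, not on the magnitude of h itself. -/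
open Real MeasureTheory intervalIntegral

/-! A weight of mean zero does not see constants, so `h (x + δ sin (2π t))` may be replaced in `b1`
by its increment from `h x`. The Lipschitz bound makes this increment at most `L δ |sin (2π t)|`,
and `sin²` has mean `1/2`, which cancels the normalising factor `2`. -/

section MeanZeroWeight

variable {α 𝕜 E : Type*} [MeasurableSpace α] {μ : Measure α} [RCLike 𝕜]
  [NormedAddCommGroup E] [NormedSpace ℝ E] [NormedSpace 𝕜 E] [CompleteSpace E]
  {w : α → 𝕜} {f : α → E}

theorem integral_smul_sub_const_of_integral_eq_zero (hw : Integrable w μ)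
    (hw_zero : ∫ t, w t ∂μ = 0) (hwf : Integrable (fun t ↦ w t • f t) μ) (c : E) :
    ∫ t, w t • (f t - c) ∂μ = ∫ t, w t • f t ∂μ := by
  simp only [smul_sub]
  rw [MeasureTheory.integral_sub hwf (hw.smul_const c), _root_.integral_smul_const, hw_zero,
    zero_smul, sub_zero]

theorem norm_integral_smul_le_of_norm_sub_le (hw : Integrable w μ)
    (hw_zero : ∫ t, w t ∂μ = 0) (hw_sq : Integrable (fun t ↦ ‖w t‖ ^ 2) μ)
    (hwf : Integrable (fun t ↦ w t • f t) μ) {c : E} {C : ℝ}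
    (hf : ∀ᵐ t ∂μ, ‖f t - c‖ ≤ C * ‖w t‖) :
    ‖∫ t, w t • f t ∂μ‖ ≤ C * ∫ t, ‖w t‖ ^ 2 ∂μ := by
  rw [← integral_smul_sub_const_of_integral_eq_zero hw hw_zero hwf c,
    ← MeasureTheory.integral_const_mul]
  refine norm_integral_le_of_norm_le (hw_sq.const_mul C) (hf.mono fun t ht ↦ ?_)
  calc ‖w t • (f t - c)‖ = ‖w t‖ * ‖f t - c‖ := norm_smul _ _
    _ ≤ ‖w t‖ * (C * ‖w t‖) := by gcongr
    _ = C * ‖w t‖ ^ 2 := by ring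

end MeanZeroWeight

theorem integral_sin_mul_sq_over_period {ω : ℝ} (hω : ω ≠ 0) (a : ℝ) :
    ∫ t in a..a + 2 * π / ω, sin (ω * t) ^ 2 = π / ω := by
  have h_period : ω * (a + 2 * π / ω) = ω * a + 2 * π := by field_simp
  rw [integral_comp_mul_left (fun s ↦ sin s ^ 2) hω, h_period, integral_sin_sq, cos_add_two_pi,
    sin_add_two_pi, smul_eq_mul]
  field_simp
  ring

theorem abs_apply_add_mul_sub_le {h : ℝ → ℝ} {δ L x s : ℝ} (hδ : 0 ≤ δ)
    (h_center : ∀ u ∈ Set.Icc (x - δ) (x + δ), |h u - h x| ≤ L * |u - x|) (hs : |s| ≤ 1) :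
    |h (x + δ * s) - h x| ≤ L * δ * |s| := by
  have h_dist : |x + δ * s - x| = δ * |s| := by rw [add_sub_cancel_left, abs_mul, abs_of_nonneg hδ]
  have h_mem : x + δ * s ∈ Set.Icc (x - δ) (x + δ) := by
    rw [← Real.closedBall_eq_Icc, Metric.mem_closedBall, Real.dist_eq, h_dist]
    exact mul_le_of_le_one_right hδ hs
  simpa only [h_dist, mul_assoc] using h_center _ h_mem

theorem b1_le_lipschitz_bound_general {h : ℝ → ℝ} {δ L x : ℝ} (hδ : 0 ≤ δ)
    (h_int : IntervalIntegrable (fun t ↦ h (x + δ * sin (2 * π * t))) volume 0 1)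
    (h_center : ∀ u ∈ Set.Icc (x - δ) (x + δ), |h u - h x| ≤ L * |u - x|) :
    |b1 h δ x| ≤ L * δ := by
  have hω : 2 * π ≠ 0 := two_pi_pos.ne'
  have h_mean : ∫ t in (0 : ℝ)..1, sin (2 * π * t) = 0 := by simp
  have h_energy : ∫ t in (0 : ℝ)..1, ‖sin (2 * π * t)‖ ^ 2 = 1 / 2 := by
    have h_half : π / (2 * π) = 1 / 2 := by field_simp
    simpa [div_self hω, h_half] using integral_sin_mul_sq_over_period hω 0
  have h_sin : Continuous fun t ↦ sin (2 * π * t) := by fun_prop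
  have h_bound : |∫ t in (0 : ℝ)..1, sin (2 * π * t) * h (x + δ * sin (2 * π * t))| ≤
      L * δ * ∫ t in (0 : ℝ)..1, ‖sin (2 * π * t)‖ ^ 2 := by
    rw [integral_of_le zero_le_one] at h_mean
    simp only [integral_of_le zero_le_one]
    exact norm_integral_smul_le_of_norm_sub_le (h_sin.intervalIntegrable 0 1).1 h_mean
      ((h_sin.norm.pow 2).intervalIntegrable 0 1).1 (h_int.continuousOn_mul h_sin.continuousOn).1
      (.of_forall fun t ↦ abs_apply_add_mul_sub_le hδ h_center (abs_sin_le_one _))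
  calc |b1 h δ x|
      = 2 * |∫ t in (0 : ℝ)..1, sin (2 * π * t) * h (x + δ * sin (2 * π * t))| := by
        simp only [b1, mul_comm (h _), abs_mul, abs_two]
    _ ≤ 2 * (L * δ * ∫ t in (0 : ℝ)..1, ‖sin (2 * π * t)‖ ^ 2) := by gcongr
    _ = L * δ := by rw [h_energy]; ring

/-- the averaged drift is bounded by the local Lipschitz constant times `δ`. -/
theorem b1_le_lipschitz_bound (h : ℝ → ℝ) (hc : Continuous h)
    (δ L x : ℝ) (hδ : 0 < δ) (hL : 0 ≤ L)
    (hLip : ∀ u ∈ Set.Icc (x - δ) (x + δ), ∀ v ∈ Set.Icc (x - δ) (x + δ),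
      |h u - h v| ≤ L * |u - v|) :
    |b1 h δ x| ≤ L * δ := by
  have hx : x ∈ Set.Icc (x - δ) (x + δ) := ⟨by linarith, by linarith⟩
  exact b1_le_lipschitz_bound_general hδ.le (Continuous.intervalIntegrable (by fun_prop) 0 1)
    fun u hu ↦ hLip u hu x hx
end

section
/- (Lemma 2(b), concrete form) There exists δ̄* > 0 such that for every δ ∈ (0, δ̄*] there exists x*ₐδ ∈ (x* − δ, x* + δ) with b₁δ(x*ₐδ) = 0 such that (x*ₐδ, a₀δ(x*ₐδ)/2) is an equilibrium of the cascade average system which is locally exponentially stable: for every γ > 0 there exist ρ, c, λ > 0 such that every solution (xₐ, ȳₐ) with ‖(xₐ(0) − x*ₐδ, ȳₐ(0) − a₀δ(x*ₐδ)/2)‖ ≤ ρ satisfies ‖(xₐ(t) − x*ₐδ, ȳₐ(t) − a₀δ(x*ₐδ)/2)‖ ≤ c·e^{−λt}·‖(xₐ(0) − x*ₐδ, ȳₐ(0) − a₀δ(x*ₐδ)/2)‖ for all t ≥ 0. -/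
open Real MeasureTheory intervalIntegral Filter

/-- Zeroth Fourier coefficient of `t ↦ h (x + δ sin (2π t))`. -/
noncomputable def a0 (h : ℝ → ℝ) (δ x : ℝ) : ℝ :=
  2 * ∫ t in (0:ℝ)..1, h (x + δ * Real.sin (2 * Real.pi * t))

/-!
Write `d = xstar - x` for the offset of the minimiser. Since
`(δ s - d) (δ + d s) = (δ² - d²) s - δ d (1 - s²)`, integrating `h' (x + δ s) (δ s - d) (δ + d s)`
over `s = sin (2π t)`, with one integration by parts in the last term, gives
`d * b1 h δ x < (δ² - d²) * b1 h' δ x` whenever `|d| ≤ δ`, because `h' y * (y - xstar)` is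
nonnegative and not identically zero. At `d = ±δ` this is the sign change that produces a zero of
`b1 h δ`; at such a zero it says that the derivative `b1 h' δ` of `b1 h δ` is positive. Exponential
stability of the cascade then follows from a quadratic Lyapunov function with a large weight on the
driving variable.
-/

/-- The average of `φ (sin (2π t))` over one period: `a0` and `b1` are twice such averages. -/
noncomputable def sinMean (φ : ℝ → ℝ) : ℝ :=
  ∫ t in (0 : ℝ)..1, φ (sin (2 * π * t))

/-- The vector field of the cascade average system with gain `γ`, on pairs `(xₐ, ȳₐ)`. -/
noncomputable def cascadeAverage (h : ℝ → ℝ) (δ γ : ℝ) (u : ℝ × ℝ) : ℝ × ℝ :=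
  (-(γ / 2) * b1 h δ u.1, -γ * u.2 + γ * a0 h δ u.1 / 2)

/-- The vector field of `x' = f x`, `y' = γ (g x - y)`: a first-order filter with output `y` driven
by the autonomous variable `x`. -/
def filterCascade (f g : ℝ → ℝ) (γ : ℝ) (u : ℝ × ℝ) : ℝ × ℝ :=
  (f u.1, γ * (g u.1 - u.2))

/-- Local exponential stability of `z` for the autonomous equation `u' = F u`. It is a bound on
forward solutions only; `F z = 0` and the existence of solutions are not part of it. -/
def IsLocExpStable {E : Type*} [NormedAddCommGroup E] [NormedSpace ℝ E] (F : E → E) (z : E) :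
    Prop :=
  ∃ ρ c lam : ℝ, 0 < ρ ∧ 0 < c ∧ 0 < lam ∧
    ∀ u : ℝ → E, (∀ t, 0 ≤ t → HasDerivAt u (F (u t)) t) → ‖u 0 - z‖ ≤ ρ →
      ∀ t, 0 ≤ t → ‖u t - z‖ ≤ c * exp (-lam * t) * ‖u 0 - z‖

/-- The quadratic form in `u - z` that puts weight `K` on the first coordinate and `1` on the
second; the Lyapunov function of a filter cascade. -/
def weightedSq (K : ℝ) (z u : ℝ × ℝ) : ℝ :=
  K * (u.1 - z.1) ^ 2 + (u.2 - z.2) ^ 2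

section SineAverages

open Set

variable {φ ψ : ℝ → ℝ}

lemma intervalIntegrable_comp_sin (hφ : Continuous φ) (a b : ℝ) :
    IntervalIntegrable (fun t => φ (sin (2 * π * t))) volume a b :=
  (by fun_prop : Continuous fun t => φ (sin (2 * π * t))).intervalIntegrable a b

lemma sinMean_const_mul (c : ℝ) (φ : ℝ → ℝ) : sinMean (fun s => c * φ s) = c * sinMean φ :=
  intervalIntegral.integral_const_mul c _

lemma sinMean_sub (hφ : Continuous φ) (hψ : Continuous ψ) :
    sinMean (fun s => φ s - ψ s) = sinMean φ - sinMean ψ :=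
  intervalIntegral.integral_sub (intervalIntegrable_comp_sin hφ 0 1)
    (intervalIntegrable_comp_sin hψ 0 1)

lemma exists_mem_Icc_sin_two_pi_mul_eq {s : ℝ} (hs : s ∈ Icc (-1 : ℝ) 1) :
    ∃ t ∈ Icc (0 : ℝ) 1, sin (2 * π * t) = s := by
  have hle := arcsin_le_pi_div_two s
  have hge := neg_pi_div_two_le_arcsin s
  refine ⟨(π - arcsin s) / (2 * π), ⟨?_, ?_⟩, ?_⟩
  · exact div_nonneg (by linarith [pi_pos]) two_pi_pos.le
  · rw [div_le_one two_pi_pos]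
    linarith
  · rw [mul_div_cancel₀ _ two_pi_pos.ne', sin_pi_sub, sin_arcsin hs.1 hs.2]

lemma sinMean_pos (hφ : Continuous φ) (hnonneg : ∀ s ∈ Icc (-1 : ℝ) 1, 0 ≤ φ s)
    (hpos : ∃ s ∈ Icc (-1 : ℝ) 1, 0 < φ s) : 0 < sinMean φ := by
  obtain ⟨s, hs, hφs⟩ := hpos
  obtain ⟨t, ht, rfl⟩ := exists_mem_Icc_sin_two_pi_mul_eq hs
  exact intervalIntegral.integral_pos one_pos
    (by fun_prop : Continuous fun t => φ (sin (2 * π * t))).continuousOn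
    (fun t _ => hnonneg _ (sin_mem_Icc (2 * π * t))) ⟨t, ht, hφs⟩

lemma sinMean_mul_id_eq_sinMean_deriv_mul (hφ : ContDiff ℝ 1 φ) :
    sinMean (fun s => φ s * s) = sinMean (fun s => deriv φ s * (1 - s ^ 2)) := by
  have hderiv (t : ℝ) : HasDerivAt (fun t => φ (sin (2 * π * t)) * cos (2 * π * t))
      (2 * π * (deriv φ (sin (2 * π * t)) * (1 - sin (2 * π * t) ^ 2)
        - φ (sin (2 * π * t)) * sin (2 * π * t))) t := by
    have hlin : HasDerivAt (fun t : ℝ => 2 * π * t) (2 * π) t := hasDerivAt_const_mul _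
    have hcomp := ((hφ.differentiable one_ne_zero).differentiableAt.hasDerivAt).comp t hlin.sin
    refine (hcomp.mul hlin.cos).congr_deriv ?_
    rw [← cos_sq', Function.comp_apply]
    ring
  have hzero : 2 * π * sinMean (fun s => deriv φ s * (1 - s ^ 2) - φ s * s) = 0 := by
    rw [← sinMean_const_mul]
    refine (integral_eq_sub_of_hasDerivAt (fun t _ => hderiv t)
      (intervalIntegrable_comp_sin (φ := fun s => 2 * π * (deriv φ s * (1 - s ^ 2) - φ s * s))
        (by fun_prop) 0 1)).trans ?_
    simp
  rw [sinMean_sub (by fun_prop) (by fun_prop)] at hzero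
  exact (sub_eq_zero.mp ((mul_eq_zero.mp hzero).resolve_left two_pi_pos.ne')).symm

lemma hasDerivAt_sinMean {F F' : ℝ → ℝ → ℝ} (hF : ∀ x, Continuous (F x))
    (hF' : Continuous (Function.uncurry F'))
    (hderiv : ∀ x s, HasDerivAt (fun x => F x s) (F' x s) x) (x₀ : ℝ) :
    HasDerivAt (fun x => sinMean (F x)) (sinMean (F' x₀)) x₀ := by
  obtain ⟨C, hC⟩ := ((isCompact_closedBall x₀ 1).prod isCompact_Icc).exists_bound_of_continuousOn
    (hF'.continuousOn (s := Metric.closedBall x₀ 1 ×ˢ Icc (-1 : ℝ) 1))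
  have hF'x : Continuous (F' x₀) := hF'.comp (Continuous.prodMk_right x₀)
  refine (intervalIntegral.hasDerivAt_integral_of_dominated_loc_of_deriv_le
    (F := fun x t => F x (sin (2 * π * t))) (F' := fun x t => F' x (sin (2 * π * t)))
    (bound := fun _ => C) (Metric.ball_mem_nhds x₀ one_pos)
    (.of_forall fun x => (intervalIntegrable_comp_sin (hF x) 0 1).def'.aestronglyMeasurable)
    (intervalIntegrable_comp_sin (hF x₀) 0 1)
    (intervalIntegrable_comp_sin hF'x 0 1).def'.aestronglyMeasurable
    (.of_forall fun t _ x hx =>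
      hC (x, sin (2 * π * t)) ⟨Metric.ball_subset_closedBall hx, sin_mem_Icc _⟩)
    intervalIntegrable_const (.of_forall fun t _ x _ => hderiv x _)).2

end SineAverages

section FourierCoefficients

variable {h : ℝ → ℝ}

lemma b1_eq_sinMean (h : ℝ → ℝ) (δ x : ℝ) : b1 h δ x = 2 * sinMean fun s => h (x + δ * s) * s :=
  rfl

lemma hasDerivAt_b1 (hh : ContDiff ℝ 1 h) (δ x : ℝ) :
    HasDerivAt (b1 h δ) (b1 (deriv h) δ x) x := by
  exact (hasDerivAt_sinMean (F := fun x s => h (x + δ * s) * s)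
    (F' := fun x s => deriv h (x + δ * s) * s) (by fun_prop) (by fun_prop)
    (fun x s => ((hh.differentiable one_ne_zero _).hasDerivAt.comp_add_const x _).mul_const s)
    x).const_mul 2

lemma hasDerivAt_a0 (hh : ContDiff ℝ 1 h) (δ x : ℝ) :
    HasDerivAt (a0 h δ) (a0 (deriv h) δ x) x := by
  exact (hasDerivAt_sinMean (F := fun x s => h (x + δ * s))
    (F' := fun x s => deriv h (x + δ * s)) (by fun_prop) (by fun_prop)
    (fun x s => (hh.differentiable one_ne_zero _).hasDerivAt.comp_add_const x _) x).const_mul 2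

lemma b1_eq_sinMean_deriv (hh : ContDiff ℝ 1 h) (δ x : ℝ) :
    b1 h δ x = 2 * (δ * sinMean fun s => deriv h (x + δ * s) * (1 - s ^ 2)) := by
  have hderiv (s : ℝ) : deriv (fun s => h (x + δ * s)) s = δ * deriv h (x + δ * s) := by
    rw [deriv_comp_mul_left δ (fun y => h (x + y)), deriv_comp_const_add, smul_eq_mul]
  rw [b1_eq_sinMean, sinMean_mul_id_eq_sinMean_deriv_mul (by fun_prop),
    ← sinMean_const_mul δ]
  simp only [hderiv, mul_assoc]

end FourierCoefficients

section UniqueMinimum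

open Set

variable {h : ℝ → ℝ} {xstar : ℝ}

lemma injOn_of_pos_le_abs_sub {α : ℝ → ℝ} {S : Set ℝ} (hα : ∀ r, 0 < r → 0 < α r)
    (hlb : ∀ x₁ ∈ S, ∀ x₂ ∈ S, α |x₂ - x₁| ≤ |h x₂ - h x₁|) : InjOn h S := by
  intro x₁ hx₁ x₂ hx₂ heq
  by_contra hne
  have hpos : 0 < |h x₂ - h x₁| :=
    (hα _ (abs_pos.mpr (sub_ne_zero.mpr (Ne.symm hne)))).trans_le (hlb x₁ hx₁ x₂ hx₂)
  rw [heq, sub_self, abs_zero] at hpos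
  exact hpos.false

lemma monotoneOn_Ici_of_injOn (hcont : ContinuousOn h (Ici xstar)) (hinj : InjOn h (Ici xstar))
    (hmin : IsMinOn h (Ici xstar) xstar) : MonotoneOn h (Ici xstar) := by
  intro x hx y hy hxy
  exact (ContinuousOn.strictMonoOn_of_injOn_Icc hy (hmin hy) (hcont.mono Icc_subset_Ici_self)
    (hinj.mono Icc_subset_Ici_self)).monotoneOn ⟨hx, hxy⟩ ⟨hy, le_rfl⟩ hxy

lemma antitoneOn_Iic_of_injOn (hcont : ContinuousOn h (Iic xstar)) (hinj : InjOn h (Iic xstar))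
    (hmin : IsMinOn h (Iic xstar) xstar) : AntitoneOn h (Iic xstar) := by
  intro x hx y hy hxy
  exact (ContinuousOn.strictAntiOn_of_injOn_Icc hx (hmin hx) (hcont.mono Icc_subset_Iic_self)
    (hinj.mono Icc_subset_Iic_self)).antitoneOn ⟨le_rfl, hx⟩ ⟨hxy, hy⟩ hxy

lemma antitoneOn_and_monotoneOn_of_pos_le_abs_sub {α : ℝ → ℝ} (hcont : Continuous h)
    (hmin : ∀ x, x ≠ xstar → h xstar < h x) (hα : ∀ r, 0 < r → 0 < α r)
    (hlb : ∀ x₁ x₂, (x₁ - xstar) * (x₂ - xstar) ≥ 0 → α |x₂ - x₁| ≤ |h x₂ - h x₁|) :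
    AntitoneOn h (Iic xstar) ∧ MonotoneOn h (Ici xstar) := by
  have hmin_le (x : ℝ) : h xstar ≤ h x := by
    rcases eq_or_ne x xstar with rfl | hne
    exacts [le_rfl, (hmin x hne).le]
  have hinj_left : InjOn h (Iic xstar) := injOn_of_pos_le_abs_sub hα fun x₁ hx₁ x₂ hx₂ =>
    hlb x₁ x₂ (mul_nonneg_of_nonpos_of_nonpos (sub_nonpos.mpr hx₁) (sub_nonpos.mpr hx₂))
  have hinj_right : InjOn h (Ici xstar) := injOn_of_pos_le_abs_sub hα fun x₁ hx₁ x₂ hx₂ =>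
    hlb x₁ x₂ (mul_nonneg (sub_nonneg.mpr hx₁) (sub_nonneg.mpr hx₂))
  exact ⟨antitoneOn_Iic_of_injOn hcont.continuousOn hinj_left fun x _ => hmin_le x,
    monotoneOn_Ici_of_injOn hcont.continuousOn hinj_right fun x _ => hmin_le x⟩

lemma deriv_mul_sub_nonneg (hanti : AntitoneOn h (Iic xstar)) (hmono : MonotoneOn h (Ici xstar))
    (y : ℝ) : 0 ≤ deriv h y * (y - xstar) := by
  rcases lt_trichotomy y xstar with hy | rfl | hy
  · rw [← derivWithin_of_mem_nhds (Iic_mem_nhds hy)]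
    exact mul_nonneg_of_nonpos_of_nonpos hanti.derivWithin_nonpos (sub_nonpos.mpr hy.le)
  · rw [sub_self, mul_zero]
  · rw [← derivWithin_of_mem_nhds (Ici_mem_nhds hy)]
    exact mul_nonneg hmono.derivWithin_nonneg (sub_nonneg.mpr hy.le)

lemma exists_deriv_mul_sub_pos (hdiff : Differentiable ℝ h)
    (hmin : ∀ x, x ≠ xstar → h xstar < h x) {a b : ℝ} (hab : a < b) (hmem : xstar ∈ Icc a b) :
    ∃ y ∈ Ioo a b, 0 < deriv h y * (y - xstar) := by
  rcases hmem.2.lt_or_eq with hb | rfl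
  · obtain ⟨y, hy, hslope⟩ := exists_deriv_eq_slope h hb hdiff.continuous.continuousOn
      hdiff.differentiableOn
    refine ⟨y, Ioo_subset_Ioo_left hmem.1 hy, mul_pos ?_ (sub_pos.mpr hy.1)⟩
    rw [hslope]
    exact div_pos (sub_pos.mpr (hmin b hb.ne')) (sub_pos.mpr hb)
  · obtain ⟨y, hy, hslope⟩ := exists_deriv_eq_slope h hab hdiff.continuous.continuousOn
      hdiff.differentiableOn
    refine ⟨y, hy, mul_pos_of_neg_of_neg ?_ (sub_neg.mpr hy.2)⟩
    rw [hslope]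
    exact div_neg_of_neg_of_pos (sub_neg.mpr (hmin a hab.ne)) (sub_pos.mpr hab)

lemma sinMean_deriv_mul_pos (hh : ContDiff ℝ 1 h) (hmin : ∀ x, x ≠ xstar → h xstar < h x)
    (hanti : AntitoneOn h (Iic xstar)) (hmono : MonotoneOn h (Ici xstar)) {δ x : ℝ} (hδ : 0 < δ)
    (hx : |xstar - x| ≤ δ) :
    0 < sinMean fun s =>
      deriv h (x + δ * s) * (x + δ * s - xstar) * (δ + (xstar - x) * s) := by
  obtain ⟨hx₁, hx₂⟩ := abs_le.mp hx
  have hweight (s : ℝ) : δ * (1 - |s|) ≤ δ + (xstar - x) * s := by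
    have hprod : |(xstar - x) * s| ≤ δ * |s| := by
      rw [abs_mul]
      gcongr
    linarith [neg_le_of_abs_le hprod]
  refine sinMean_pos (by fun_prop) (fun s hs => ?_) ?_
  · have hs' : |s| ≤ 1 := abs_le.mpr hs
    exact mul_nonneg (deriv_mul_sub_nonneg hanti hmono _)
      ((mul_nonneg hδ.le (sub_nonneg.mpr hs')).trans (hweight s))
  · obtain ⟨y, ⟨hy₁, hy₂⟩, hpos⟩ := exists_deriv_mul_sub_pos (hh.differentiable one_ne_zero) hmin
      (show x - δ < x + δ by linarith) ⟨by linarith, by linarith⟩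
    obtain ⟨s, rfl⟩ : ∃ s, x + δ * s = y := ⟨(y - x) / δ, by field_simp; ring⟩
    have hs : |s| < 1 := abs_lt.mpr ⟨by nlinarith, by nlinarith⟩
    exact ⟨s, abs_le.mp hs.le, mul_pos hpos
      ((mul_pos hδ (sub_pos.mpr hs)).trans_le (hweight s))⟩

lemma sub_mul_b1_lt (hh : ContDiff ℝ 1 h) (hmin : ∀ x, x ≠ xstar → h xstar < h x)
    (hanti : AntitoneOn h (Iic xstar)) (hmono : MonotoneOn h (Ici xstar)) {δ x : ℝ} (hδ : 0 < δ)
    (hx : |xstar - x| ≤ δ) :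
    (xstar - x) * b1 h δ x < (δ ^ 2 - (xstar - x) ^ 2) * b1 (deriv h) δ x := by
  have hsplit : (sinMean fun s =>
        deriv h (x + δ * s) * (x + δ * s - xstar) * (δ + (xstar - x) * s)) =
      (δ ^ 2 - (xstar - x) ^ 2) * (sinMean fun s => deriv h (x + δ * s) * s) -
        δ * (xstar - x) * sinMean fun s => deriv h (x + δ * s) * (1 - s ^ 2) := by
    rw [← sinMean_const_mul, ← sinMean_const_mul, ← sinMean_sub (by fun_prop) (by fun_prop)]
    congr 1 with s
    ring
  have hpos := sinMean_deriv_mul_pos hh hmin hanti hmono hδ hx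
  rw [b1_eq_sinMean_deriv hh, b1_eq_sinMean]
  linarith

lemma exists_b1_eq_zero_and_deriv_pos (hh : ContDiff ℝ 1 h)
    (hmin : ∀ x, x ≠ xstar → h xstar < h x) (hanti : AntitoneOn h (Iic xstar))
    (hmono : MonotoneOn h (Ici xstar)) {δ : ℝ} (hδ : 0 < δ) :
    ∃ p ∈ Ioo (xstar - δ) (xstar + δ), b1 h δ p = 0 ∧ 0 < b1 (deriv h) δ p := by
  have hcont : Continuous (b1 h δ) :=
    continuous_iff_continuousAt.mpr fun x => (hasDerivAt_b1 hh δ x).continuousAt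
  have hleft : b1 h δ (xstar - δ) < 0 := by
    have hlt := sub_mul_b1_lt hh hmin hanti hmono (x := xstar - δ) hδ (by simp [abs_of_pos hδ])
    rw [sub_sub_cancel, sub_self, zero_mul] at hlt
    exact neg_of_mul_neg_right hlt hδ.le
  have hright : 0 < b1 h δ (xstar + δ) := by
    have hlt := sub_mul_b1_lt hh hmin hanti hmono (x := xstar + δ) hδ (by simp [abs_of_pos hδ])
    rw [sub_add_cancel_left, neg_sq, sub_self, zero_mul, neg_mul, neg_lt_zero] at hlt
    exact pos_of_mul_pos_right hlt hδ.le
  obtain ⟨p, hp, hroot⟩ := intermediate_value_Ioo (by linarith) hcont.continuousOn ⟨hleft, hright⟩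
  have hdist : |xstar - p| < δ := abs_lt.mpr ⟨by linarith [hp.2], by linarith [hp.1]⟩
  have hlt := sub_mul_b1_lt hh hmin hanti hmono hδ hdist.le
  rw [hroot, mul_zero] at hlt
  exact ⟨p, hp, hroot, pos_of_mul_pos_right hlt (sub_nonneg.mpr (sq_le_sq.mpr
    (hdist.le.trans (le_abs_self δ))))⟩

end UniqueMinimum

section Lyapunov

open Set

lemma lt_of_hasDerivAt_le_neg_mul {V V' : ℝ → ℝ} {κ R : ℝ} (hκ : 0 < κ) (hV₀ : 0 ≤ V 0)
    (hR : V 0 < R) (hV : ∀ t, 0 ≤ t → HasDerivAt V (V' t) t)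
    (hdecay : ∀ t, 0 ≤ t → V t < R → V' t ≤ -κ * V t) {t : ℝ} (ht : 0 ≤ t) : V t < R := by
  obtain ⟨c, hc, hcR⟩ := exists_between hR
  refine (image_le_of_deriv_right_lt_deriv_boundary (a := 0) (b := t) (B := fun _ => c)
    (fun s hs => (hV s hs.1).continuousAt.continuousWithinAt)
    (fun s hs => (hV s hs.1).hasDerivWithinAt) hc.le (fun s => hasDerivAt_const s c)
    (fun s hs hVs => ?_) ⟨ht, le_rfl⟩).trans_lt hcR
  calc V' s ≤ -κ * V s := hdecay s hs.1 (hVs.trans_lt hcR)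
    _ < 0 := by
      rw [hVs]
      exact mul_neg_of_neg_of_pos (neg_neg_of_pos hκ) (hV₀.trans_lt hc)

lemma le_mul_exp_of_hasDerivAt_le_neg_mul {V V' : ℝ → ℝ} {κ R : ℝ} (hκ : 0 < κ) (hV₀ : 0 ≤ V 0)
    (hR : V 0 < R) (hV : ∀ t, 0 ≤ t → HasDerivAt V (V' t) t)
    (hdecay : ∀ t, 0 ≤ t → V t < R → V' t ≤ -κ * V t) {t : ℝ} (ht : 0 ≤ t) :
    V t ≤ V 0 * exp (-κ * t) := by
  have hbound := le_gronwallBound_of_liminf_deriv_right_le (a := 0) (b := t) (K := -κ) (ε := 0)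
    (fun s hs => (hV s hs.1).continuousAt.continuousWithinAt)
    (fun s hs r hr => (hV s hs.1).hasDerivWithinAt.liminf_right_slope_le hr) le_rfl
    (fun s hs => (hdecay s hs.1 (lt_of_hasDerivAt_le_neg_mul hκ hV₀ hR hV hdecay hs.1)).trans_eq
      (add_zero _).symm) t ⟨ht, le_rfl⟩
  rwa [gronwallBound_ε0, sub_zero] at hbound

theorem isLocExpStable_of_lyapunov {E : Type*} [NormedAddCommGroup E] [NormedSpace ℝ E]
    {F : E → E} {z : E} {W : E → ℝ} {W' : E → E →L[ℝ] ℝ} {m M κ r : ℝ} (hm : 0 < m) (hM : 0 < M)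
    (hκ : 0 < κ) (hr : 0 < r) (hW : ∀ u, HasFDerivAt W (W' u) u)
    (hlower : ∀ u, m * ‖u - z‖ ^ 2 ≤ W u) (hupper : ∀ u, W u ≤ M * ‖u - z‖ ^ 2)
    (hdecay : ∀ u, ‖u - z‖ < r → W' u (F u) ≤ -κ * W u) : IsLocExpStable F z := by
  refine ⟨r * √(m / (2 * M)), √(M / m), κ / 2, by positivity, by positivity, by positivity,
    fun u hu hu₀ t ht => ?_⟩
  have hstart : W (u 0) < m * r ^ 2 := calc
    W (u 0) ≤ M * ‖u 0 - z‖ ^ 2 := hupper _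
    _ ≤ M * (r * √(m / (2 * M))) ^ 2 := by gcongr
    _ = m * r ^ 2 / 2 := by
      rw [mul_pow, sq_sqrt (by positivity)]
      field_simp
    _ < m * r ^ 2 := half_lt_self (by positivity)
  have hnear {s : ℝ} (hs : W (u s) < m * r ^ 2) : ‖u s - z‖ < r :=
    lt_of_pow_lt_pow_left₀ 2 hr.le (lt_of_mul_lt_mul_left ((hlower _).trans_lt hs) hm.le)
  have hexp : W (u t) ≤ W (u 0) * exp (-κ * t) :=
    le_mul_exp_of_hasDerivAt_le_neg_mul (V := W ∘ u) (V' := fun s => W' (u s) (F (u s))) hκ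
      ((by positivity : 0 ≤ m * ‖u 0 - z‖ ^ 2).trans (hlower _)) hstart
      (fun s hs => (hW (u s)).comp_hasDerivAt s (hu s hs)) (fun s _ hWs => hdecay _ (hnear hWs)) ht
  refine le_of_sq_le_sq ?_ (by positivity)
  calc ‖u t - z‖ ^ 2 ≤ W (u t) / m := by
        rw [le_div_iff₀' hm]
        exact hlower _
    _ ≤ M * ‖u 0 - z‖ ^ 2 * exp (-κ * t) / m := by
        gcongr
        exact hexp.trans (by gcongr; exact hupper _)
    _ = (√(M / m) * exp (-(κ / 2) * t) * ‖u 0 - z‖) ^ 2 := by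
        rw [mul_pow, mul_pow, sq_sqrt (by positivity), ← exp_nat_mul]
        ring_nf

end Lyapunov

section FilterCascade

open Topology

lemma sq_norm_sub_le_weightedSq {K : ℝ} (hK : 1 ≤ K) (z u : ℝ × ℝ) :
    ‖u - z‖ ^ 2 ≤ weightedSq K z u := by
  have hfst : (u.1 - z.1) ^ 2 ≤ K * (u.1 - z.1) ^ 2 := le_mul_of_one_le_left (sq_nonneg _) hK
  rw [weightedSq, Prod.norm_def]
  rcases max_choice ‖(u - z).1‖ ‖(u - z).2‖ with hmax | hmax <;>
    rw [hmax, norm_eq_abs, sq_abs]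
  · exact hfst.trans (le_add_of_nonneg_right (sq_nonneg _))
  · exact le_add_of_nonneg_left ((sq_nonneg _).trans hfst)

lemma weightedSq_le_mul_sq_norm_sub {K : ℝ} (hK : 0 ≤ K) (z u : ℝ × ℝ) :
    weightedSq K z u ≤ (K + 1) * ‖u - z‖ ^ 2 := by
  have hfst : (u.1 - z.1) ^ 2 ≤ ‖u - z‖ ^ 2 := sq_le_sq.mpr
    ((norm_fst_le (u - z)).trans (le_abs_self _))
  have hsnd : (u.2 - z.2) ^ 2 ≤ ‖u - z‖ ^ 2 := sq_le_sq.mpr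
    ((norm_snd_le (u - z)).trans (le_abs_self _))
  rw [weightedSq, add_one_mul]
  gcongr

lemma hasFDerivAt_weightedSq (K : ℝ) (z u : ℝ × ℝ) :
    HasFDerivAt (weightedSq K z)
      ((2 * K * (u.1 - z.1)) • ContinuousLinearMap.fst ℝ ℝ ℝ +
        (2 * (u.2 - z.2)) • ContinuousLinearMap.snd ℝ ℝ ℝ) u := by
  have hfst := ((hasFDerivAt_fst (𝕜 := ℝ) (p := u)).sub_const z.1).pow 2 |>.const_mul K
  have hsnd := ((hasFDerivAt_snd (𝕜 := ℝ) (p := u)).sub_const z.2).pow 2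
  refine (hfst.add hsnd).congr_fderiv ?_
  ext <;> simp [mul_assoc, mul_left_comm]

lemma eventually_sub_mul_le_of_hasDerivAt_neg {f : ℝ → ℝ} {d p : ℝ} (hf : HasDerivAt f d p)
    (hfp : f p = 0) (hd : d < 0) : ∀ᶠ x in 𝓝 p, (x - p) * f x ≤ d / 2 * (x - p) ^ 2 := by
  filter_upwards [(hasDerivAt_iff_isLittleO.mp hf).def (half_pos (neg_pos.mpr hd))] with x hx
  rw [hfp, sub_zero, smul_eq_mul, norm_eq_abs, norm_eq_abs] at hx
  have hmul : (x - p) * (f x - (x - p) * d) ≤ -d / 2 * (x - p) ^ 2 := calc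
    (x - p) * (f x - (x - p) * d) ≤ |x - p| * |f x - (x - p) * d| := by
      rw [← abs_mul]
      exact le_abs_self _
    _ ≤ |x - p| * (-d / 2 * |x - p|) := by gcongr
    _ = -d / 2 * (x - p) ^ 2 := by rw [mul_left_comm, abs_mul_abs_self, sq]
  linarith

lemma eventually_sq_sub_le_of_differentiableAt {g : ℝ → ℝ} {p : ℝ} (hg : DifferentiableAt ℝ g p) :
    ∃ C, 0 ≤ C ∧ ∀ᶠ x in 𝓝 p, (g x - g p) ^ 2 ≤ C * (x - p) ^ 2 := by
  obtain ⟨L, hbound⟩ := hg.isBigO_sub.bound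
  refine ⟨L ^ 2, sq_nonneg L, hbound.mono fun x hx => ?_⟩
  rw [← mul_pow, sq_le_sq, abs_mul]
  exact hx.trans (mul_le_mul_of_nonneg_right (le_abs_self L) (abs_nonneg _))

lemma filterCascade_weightedSq_decay {f g : ℝ → ℝ} {γ m C K p : ℝ} (hγ : 0 < γ)
    (hK : 0 ≤ K) (hCK : γ * C ≤ K * m) {u : ℝ × ℝ} (hf : (u.1 - p) * f u.1 ≤ -m * (u.1 - p) ^ 2)
    (hg : (g u.1 - g p) ^ 2 ≤ C * (u.1 - p) ^ 2) :
    2 * K * (u.1 - p) * (filterCascade f g γ u).1 + 2 * (u.2 - g p) * (filterCascade f g γ u).2 ≤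
      -min m γ * weightedSq K (p, g p) u := by
  set e := u.1 - p
  set y := u.2 - g p
  have hdrive : 2 * K * e * f u.1 ≤ -(2 * K * m) * e ^ 2 := by
    linarith [mul_le_mul_of_nonneg_left hf hK]
  have hfilter : 2 * y * (γ * (g u.1 - u.2)) ≤ K * m * e ^ 2 - γ * y ^ 2 := calc
    2 * y * (γ * (g u.1 - u.2)) = γ * (2 * y * (g u.1 - g p)) - 2 * (γ * y ^ 2) := by
      simp only [y]
      ring
    _ ≤ γ * (y ^ 2 + C * e ^ 2) - 2 * (γ * y ^ 2) := by
      gcongr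
      exact (two_mul_le_add_sq _ _).trans (by gcongr)
    _ ≤ K * m * e ^ 2 - γ * y ^ 2 := by
      linarith [mul_le_mul_of_nonneg_right hCK (sq_nonneg e)]
  have hm : min m γ * (K * e ^ 2) ≤ m * (K * e ^ 2) := by gcongr; exact min_le_left _ _
  have hγ' : min m γ * y ^ 2 ≤ γ * y ^ 2 := by gcongr; exact min_le_right _ _
  simp only [filterCascade, weightedSq]
  linarith

theorem isLocExpStable_filterCascade {f g : ℝ → ℝ} {d p γ : ℝ} (hf : HasDerivAt f d p)
    (hfp : f p = 0) (hd : d < 0) (hg : DifferentiableAt ℝ g p) (hγ : 0 < γ) :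
    IsLocExpStable (filterCascade f g γ) (p, g p) := by
  obtain ⟨C, hC, hgC⟩ := eventually_sq_sub_le_of_differentiableAt hg
  obtain ⟨r, hr, hball⟩ := Metric.eventually_nhds_iff.mp
    ((eventually_sub_mul_le_of_hasDerivAt_neg hf hfp hd).and hgC)
  obtain ⟨m, hm, rfl⟩ : ∃ m, 0 < m ∧ d = -(2 * m) := ⟨-d / 2, by linarith, by ring⟩
  obtain ⟨K, hK, hCK⟩ : ∃ K, 1 ≤ K ∧ γ * C ≤ K * m :=
    ⟨1 + γ * C / m, le_add_of_nonneg_right (by positivity), by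
      rw [add_mul, div_mul_cancel₀ _ hm.ne']
      linarith⟩
  refine isLocExpStable_of_lyapunov (m := 1) (M := K + 1) (κ := min m γ) one_pos (by linarith)
    (lt_min hm hγ) hr (hasFDerivAt_weightedSq K (p, g p))
    (fun u => by simpa only [one_mul] using sq_norm_sub_le_weightedSq hK (p, g p) u)
    (weightedSq_le_mul_sq_norm_sub (by linarith) (p, g p)) fun u hu => ?_
  obtain ⟨hfu, hgu⟩ := hball ((norm_fst_le (u - (p, g p))).trans_lt hu)
  exact filterCascade_weightedSq_decay hγ (by linarith) hCK (by linarith) hgu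

end FilterCascade

lemma cascadeAverage_eq_filterCascade (h : ℝ → ℝ) (δ γ : ℝ) :
    cascadeAverage h δ γ =
      filterCascade (fun x => -(γ / 2) * b1 h δ x) (fun x => a0 h δ x / 2) γ := by
  funext u
  simp only [cascadeAverage, filterCascade, Prod.mk.injEq, true_and]
  ring

theorem cascade_loc_exp_stable_equilibrium_general {h : ℝ → ℝ} {xstar δ : ℝ}
    (hh : ContDiff ℝ 1 h) (hmin : ∀ x, x ≠ xstar → h xstar < h x)
    (hanti : AntitoneOn h (Set.Iic xstar)) (hmono : MonotoneOn h (Set.Ici xstar)) (hδ : 0 < δ) :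
    ∃ xad ∈ Set.Ioo (xstar - δ) (xstar + δ), b1 h δ xad = 0 ∧
      ∀ γ : ℝ, 0 < γ → IsLocExpStable (cascadeAverage h δ γ) (xad, a0 h δ xad / 2) := by
  obtain ⟨p, hp, hroot, hslope⟩ := exists_b1_eq_zero_and_deriv_pos hh hmin hanti hmono hδ
  refine ⟨p, hp, hroot, fun γ hγ => ?_⟩
  rw [cascadeAverage_eq_filterCascade]
  exact isLocExpStable_filterCascade ((hasDerivAt_b1 hh δ p).const_mul _)
    (by rw [hroot, mul_zero]) (mul_neg_of_neg_of_pos (by linarith) hslope)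
    ((hasDerivAt_a0 hh δ p).div_const 2).differentiableAt hγ

/-- Lemma 2(b), concrete form: for small `δ` the cascade average system has a
locally exponentially stable equilibrium. -/
theorem cascade_loc_exp_stable_equilibrium (h : ℝ → ℝ) (hsmooth : ContDiff ℝ (⊤ : ℕ∞) h)
    (xstar : ℝ) (hmin : ∀ x : ℝ, x ≠ xstar → h xstar < h x)
    (α : ℝ → ℝ) (hα_cont : ContinuousOn α (Set.Ici 0))
    (hα_mono : StrictMonoOn α (Set.Ici 0)) (hα0 : α 0 = 0)
    (hα_top : Tendsto α atTop atTop)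
    (hlb : ∀ x₁ x₂ : ℝ, (x₁ - xstar) * (x₂ - xstar) ≥ 0 → α |x₂ - x₁| ≤ |h x₂ - h x₁|) :
    ∃ δstar : ℝ, 0 < δstar ∧ ∀ δ : ℝ, δ ∈ Set.Ioc 0 δstar →
      ∃ xad ∈ Set.Ioo (xstar - δ) (xstar + δ), b1 h δ xad = 0 ∧
        ∀ γ : ℝ, 0 < γ → ∃ ρ c lam : ℝ, 0 < ρ ∧ 0 < c ∧ 0 < lam ∧
          ∀ xa ya : ℝ → ℝ, Differentiable ℝ xa → Differentiable ℝ ya →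
            (∀ t : ℝ, 0 ≤ t → HasDerivAt xa (-(γ / 2) * b1 h δ (xa t)) t) →
            (∀ t : ℝ, 0 ≤ t → HasDerivAt ya (-γ * ya t + γ * a0 h δ (xa t) / 2) t) →
            ‖(xa 0 - xad, ya 0 - a0 h δ xad / 2)‖ ≤ ρ →
            ∀ t : ℝ, 0 ≤ t →
              ‖(xa t - xad, ya t - a0 h δ xad / 2)‖ ≤
                c * Real.exp (-lam * t) * ‖(xa 0 - xad, ya 0 - a0 h δ xad / 2)‖ := by
  have hα (r : ℝ) (hr : 0 < r) : 0 < α r := hα0 ▸ hα_mono Set.self_mem_Ici hr.le hr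
  have hh : ContDiff ℝ 1 h := hsmooth.of_le (mod_cast le_top)
  obtain ⟨hanti, hmono⟩ := antitoneOn_and_monotoneOn_of_pos_le_abs_sub hh.continuous hmin hα hlb
  refine ⟨1, one_pos, fun δ hδ => ?_⟩
  obtain ⟨xad, hmem, hroot, hstable⟩ :=
    cascade_loc_exp_stable_equilibrium_general hh hmin hanti hmono hδ.1
  refine ⟨xad, hmem, hroot, fun γ hγ => ?_⟩
  obtain ⟨ρ, c, lam, hρ, hc, hlam, hbound⟩ := hstable γ hγ
  exact ⟨ρ, c, lam, hρ, hc, hlam, fun xa ya _ _ hxa hya =>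
    hbound (fun t => (xa t, ya t)) fun t ht => (hxa t ht).prodMk (hya t ht)⟩
end
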